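/- Let Ω be a set partitioned into two countably infinite subsets Ω₀ and Ω₁, and let Φ : M̂ → Sym(Ω) be a group homomorphism such that Φ(τ) maps each of Ω₀ and Ω₁ onto itself and acts transitively on each of them, and Φ(ν) maps Ω₀ onto Ω₁. Then for every p ∈ Ω the stabilizer Ŝ = {g ∈ M̂ : Φ(g)(p) = p} is a Neumann subgroup of M̂; moreover, the stabilizers obtained from different choices of p ∈ Ω are conjugate subgroups of M̂. -/

import Mathlib

open Matrix Pointwise

noncomputable section

abbrev GL2Z := Matrix.GeneralLinearGroup (Fin 2) ℤ

/-- The subgroup {±I} of GL(2,ℤ), which is its center. -/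
def pmI : Subgroup GL2Z := Subgroup.zpowers (-1)

instance pmI_normal : pmI.Normal := by
  constructor
  rintro n hn g
  obtain ⟨k, hk⟩ := Subgroup.mem_zpowers_iff.mp hn
  have hc : Commute ((-1 : GL2Z) ^ k) g := (Commute.neg_one_left g).zpow_left k
  have : g * n * g⁻¹ = n := by
    rw [← hk, ← hc.eq]; group
  rw [this]; exact hn

/-- The extended modular group PGL(2,ℤ) = GL(2,ℤ)/{±I}. -/
abbrev Mhat := GL2Z ⧸ pmI

def pr : GL2Z →* Mhat := QuotientGroup.mk' pmI

def tauGL : GL2Z := ⟨!![1,1;0,1], !![1,-1;0,1], by decide, by decide⟩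
def nuGL : GL2Z := ⟨!![-1,0;0,1], !![-1,0;0,1], by decide, by decide⟩
def omegaGL : GL2Z := ⟨!![0,-1;1,0], !![0,1;-1,0], by decide, by decide⟩
def phiGL : GL2Z := ⟨!![0,-1;1,1], !![1,1;-1,0], by decide, by decide⟩

/-- τ, the class of [[1,1],[0,1]]. -/
def tau : Mhat := pr tauGL
/-- ν, the class of [[-1,0],[0,1]]. -/
def nu : Mhat := pr nuGL
/-- ω, the class of [[0,-1],[1,0]]. -/
def omega : Mhat := pr omegaGL
/-- φ, the class of [[0,-1],[1,1]]. -/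
def phi : Mhat := pr phiGL

/-- T̂ = ⟨τ, ν⟩, the stabilizer of ∞. -/
def That : Subgroup Mhat := Subgroup.closure {tau, nu}

/-- A Neumann subgroup of the extended modular group: a complement of T̂. -/
def IsNeumann (S : Subgroup Mhat) : Prop :=
  (S : Set Mhat) * (That : Set Mhat) = Set.univ ∧ S ⊓ That = ⊥

/-- The modular group PSL(2,ℤ), as the subgroup of PGL(2,ℤ) of classes of
matrices of determinant one. -/
def Msub : Subgroup Mhat :=
  Subgroup.map pr (MonoidHom.ker (Matrix.GeneralLinearGroup.det))

lemma aux_nu_sq : nu * nu = 1 := by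
  have h : nuGL * nuGL = 1 := by
    apply Units.ext
    simp only [nuGL, Units.val_mul, Units.val_one]
    decide
  rw [nu, ← map_mul, h, map_one]

lemma aux_nu_tau : nu * tau = tau⁻¹ * nu := by
  have h : tauGL * (nuGL * tauGL) = nuGL := by
    apply Units.ext
    simp only [nuGL, tauGL, Units.val_mul]
    decide
  rw [eq_inv_mul_iff_mul_eq, nu, tau, ← map_mul, ← map_mul, h]

lemma aux_nu_tau_zpow (n : ℤ) : nu * tau ^ n = tau ^ (-n) * nu := by
  have h : SemiconjBy nu tau tau⁻¹ := aux_nu_tau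
  have := (h.zpow_right n).eq
  rw [this, _root_.inv_zpow']

lemma aux_tau_mem : tau ∈ That := Subgroup.subset_closure (by simp)
lemma aux_nu_mem : nu ∈ That := Subgroup.subset_closure (by simp)

lemma aux_mem_That {g : Mhat} (hg : g ∈ That) :
    ∃ n : ℤ, g = tau ^ n ∨ g = tau ^ n * nu := by
  have hinv : nu⁻¹ = nu := inv_eq_of_mul_eq_one_left aux_nu_sq
  unfold That at hg
  induction hg using Subgroup.closure_induction with
  | mem x hx =>
    rcases hx with rfl | rfl
    · exact ⟨1, Or.inl (by simp)⟩
    · exact ⟨0, Or.inr (by simp)⟩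
  | one => exact ⟨0, Or.inl (by simp)⟩
  | mul x y _ _ hx hy =>
    obtain ⟨n, rfl | rfl⟩ := hx <;> obtain ⟨m, rfl | rfl⟩ := hy
    · exact ⟨n + m, Or.inl (by rw [_root_.zpow_add])⟩
    · exact ⟨n + m, Or.inr (by rw [_root_.zpow_add, mul_assoc])⟩
    · exact ⟨n + -m, Or.inr (by rw [_root_.zpow_add, mul_assoc, aux_nu_tau_zpow, mul_assoc])⟩
    · refine ⟨n + -m, Or.inl ?_⟩
      rw [_root_.zpow_add, mul_assoc, ← mul_assoc nu, aux_nu_tau_zpow, mul_assoc _ nu nu, aux_nu_sq,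
        mul_one]
  | inv x _ hx =>
    obtain ⟨n, rfl | rfl⟩ := hx
    · exact ⟨-n, Or.inl (by rw [_root_.zpow_neg])⟩
    · exact ⟨n, Or.inr (by rw [_root_.mul_inv_rev, hinv, ← _root_.zpow_neg, aux_nu_tau_zpow, neg_neg])⟩

lemma aux_zpow_mem {Ω : Type} (A : Set Ω) (t : Equiv.Perm Ω) (h : ⇑t '' A = A) (n : ℤ)
    {x : Ω} (hx : x ∈ A) : (t ^ n) x ∈ A := by
  have h1 : t ∈ MulAction.stabilizer (Equiv.Perm Ω) A := h
  have h2 : (t ^ n) '' A = A := Subgroup.zpow_mem _ h1 n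
  rw [← h2]
  exact ⟨x, hx, rfl⟩

lemma aux_free {Ω : Type} (A : Set Ω) (hi : A.Infinite) (t : Equiv.Perm Ω)
    (ht : ∀ x ∈ A, ∀ y ∈ A, ∃ n : ℤ, (t ^ n) x = y) {p : Ω} (hp : p ∈ A) (n : ℤ)
    (hn : (t ^ n) p = p) : n = 0 := by
  by_contra hne
  apply hi
  apply ((Set.finite_Ico (0 : ℤ) |n|).image (fun k : ℤ => (t ^ k) p)).subset
  intro y hy
  obtain ⟨m, rfl⟩ := ht p hp y hy
  refine ⟨m % n, ⟨Int.emod_nonneg _ hne, Int.emod_lt_abs _ hne⟩, ?_⟩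
  have h1 : t ^ n ∈ MulAction.stabilizer (Equiv.Perm Ω) p := hn
  have h2 : ((t ^ n) ^ (m / n)) p = p := Subgroup.zpow_mem _ h1 _
  have h3 : t ^ m = t ^ (m % n) * (t ^ n) ^ (m / n) := by
    rw [← _root_.zpow_mul, ← _root_.zpow_add, Int.emod_add_mul_ediv]
  simp only [h3, Equiv.Perm.mul_apply, h2]

/-- Given a partition Ω = Ω₀ ∪ Ω₁ into countably infinite
sets and a homomorphism Φ : M̂ → Sym(Ω) such that Φ(τ) preserves Ω₀ and Ω₁ and
acts transitively on each of them, while Φ(ν) maps Ω₀ onto Ω₁, every point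
stabilizer {g : Φ(g)(p) = p} is a Neumann subgroup of M̂; moreover stabilizers
of different points are conjugate. -/
theorem stabilizer_of_semitransitive_quadruple_isNeumann
    (Ω : Type) (Ω₀ Ω₁ : Set Ω)
    (hdisj : Disjoint Ω₀ Ω₁) (hcover : Ω₀ ∪ Ω₁ = Set.univ)
    (hc0 : Ω₀.Countable) (hi0 : Ω₀.Infinite)
    (hc1 : Ω₁.Countable) (hi1 : Ω₁.Infinite)
    (Φ : Mhat →* Equiv.Perm Ω)
    (h0 : ⇑(Φ tau) '' Ω₀ = Ω₀) (h1 : ⇑(Φ tau) '' Ω₁ = Ω₁)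
    (ht0 : ∀ x ∈ Ω₀, ∀ y ∈ Ω₀, ∃ n : ℤ, (Φ tau ^ n) x = y)
    (ht1 : ∀ x ∈ Ω₁, ∀ y ∈ Ω₁, ∃ n : ℤ, (Φ tau ^ n) x = y)
    (hv : ⇑(Φ nu) '' Ω₀ = Ω₁) :
    (∀ p : Ω, IsNeumann ((MulAction.stabilizer (Equiv.Perm Ω) p).comap Φ)) ∧
    ∀ p q : Ω, ∃ g : Mhat,
      Subgroup.map (MulAut.conj g).toMonoidHom
          ((MulAction.stabilizer (Equiv.Perm Ω) p).comap Φ) =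
        (MulAction.stabilizer (Equiv.Perm Ω) q).comap Φ := by
  have hnn : ∀ x, Φ nu (Φ nu x) = x := by
    intro x
    rw [← Equiv.Perm.mul_apply, ← map_mul, aux_nu_sq, map_one, Equiv.Perm.one_apply]
  have hv0 : ∀ x ∈ Ω₀, Φ nu x ∈ Ω₁ := fun x hx => hv ▸ ⟨x, hx, rfl⟩
  have hv1 : ∀ x ∈ Ω₁, Φ nu x ∈ Ω₀ := by
    intro x hx
    rw [← hv] at hx
    obtain ⟨y, hy, rfl⟩ := hx
    rwa [hnn]
  have hc : ∀ x, x ∈ Ω₀ ∨ x ∈ Ω₁ := fun x => by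
    have : x ∈ Ω₀ ∪ Ω₁ := hcover ▸ Set.mem_univ x
    exact this
  have hd : ∀ x, x ∈ Ω₀ → x ∈ Ω₁ → False := fun x a b => Set.disjoint_left.mp hdisj a b
  have htrans : ∀ p q, ∃ t ∈ That, Φ t p = q := by
    intro p q
    rcases hc p with hp | hp <;> rcases hc q with hq | hq
    · obtain ⟨n, hn⟩ := ht0 p hp q hq
      exact ⟨tau ^ n, Subgroup.zpow_mem _ aux_tau_mem n, by rw [map_zpow, hn]⟩
    · obtain ⟨n, hn⟩ := ht1 _ (hv0 p hp) q hq
      exact ⟨tau ^ n * nu, Subgroup.mul_mem _ (Subgroup.zpow_mem _ aux_tau_mem n) aux_nu_mem,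
        by rw [map_mul, map_zpow, Equiv.Perm.mul_apply, hn]⟩
    · obtain ⟨n, hn⟩ := ht0 _ (hv1 p hp) q hq
      exact ⟨tau ^ n * nu, Subgroup.mul_mem _ (Subgroup.zpow_mem _ aux_tau_mem n) aux_nu_mem,
        by rw [map_mul, map_zpow, Equiv.Perm.mul_apply, hn]⟩
    · obtain ⟨n, hn⟩ := ht1 p hp q hq
      exact ⟨tau ^ n, Subgroup.zpow_mem _ aux_tau_mem n, by rw [map_zpow, hn]⟩
  have hmem : ∀ (g : Mhat) (p : Ω),
      g ∈ (MulAction.stabilizer (Equiv.Perm Ω) p).comap Φ ↔ Φ g p = p := fun g p => Iff.rfl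
  refine ⟨fun p => ⟨?_, ?_⟩, fun p q => ?_⟩
  · rw [Set.eq_univ_iff_forall]
    intro g
    obtain ⟨t, ht, h⟩ := htrans p (Φ g⁻¹ p)
    refine Set.mem_mul.mpr ⟨g * t, ?_, t⁻¹, Subgroup.inv_mem _ ht, by simp⟩
    rw [SetLike.mem_coe, hmem, map_mul, Equiv.Perm.mul_apply, h, ← Equiv.Perm.mul_apply,
      ← map_mul, mul_inv_cancel, map_one, Equiv.Perm.one_apply]
  · rw [eq_bot_iff]
    rintro g ⟨hg, hT⟩
    have hg' : Φ g p = p := hg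
    rw [Subgroup.mem_bot]
    obtain ⟨n, rfl | rfl⟩ := aux_mem_That hT
    · rw [map_zpow] at hg'
      have : n = 0 := by
        rcases hc p with hp | hp
        · exact aux_free Ω₀ hi0 _ ht0 hp n hg'
        · exact aux_free Ω₁ hi1 _ ht1 hp n hg'
      rw [this, zpow_zero]
    · exfalso
      rw [map_mul, map_zpow, Equiv.Perm.mul_apply] at hg'
      rcases hc p with hp | hp
      · have := aux_zpow_mem Ω₁ _ h1 n (hv0 p hp)
        rw [hg'] at this
        exact hd p hp this
      · have := aux_zpow_mem Ω₀ _ h0 n (hv1 p hp)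
        rw [hg'] at this
        exact hd p this hp
  · obtain ⟨t, -, rfl⟩ := htrans p q
    refine ⟨t, ?_⟩
    ext g
    rw [Subgroup.mem_map_equiv, hmem, hmem, MulAut.conj_symm_apply, map_mul, map_mul, map_inv,
      Equiv.Perm.mul_apply, Equiv.Perm.mul_apply, Equiv.Perm.inv_eq_iff_eq]
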